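/- Let G be a finite graph (with a loop at every vertex) having no universal vertices and no true twins, and let G' be a circular completion of G. Then G' is a circular-arc graph if and only if G is a circular-arc graph. -/

import Mathlib

/-!
A circular completion `H` of `G` induces a circular-arc graph on `G`, so only the converse needs an
argument.

*Structure of `H`.*  Choose a circular partner `b u` of every `f u`, inside the image of `f` whenever
possible.  The images of `f` and `b` together induce a circularly-paired graph in which neighbourhood
inclusions and spanning pairs are the same as in `H` (`restrict_nbhd_subset_iff`,
`restrict_spanningPair_iff`), so minimality leaves no other vertex (`IsCircularCompletion.exists_eq`).
As the edge types of `G` are preserved, `b u` is nonadjacent to `f v` iff `N[v] ⊆ N[u]` in `G`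
(`CircularPair.not_adj_iff`, `SameEdgeTypes.nbhd_subset_iff`), and, for partners outside the image of
`f`, `b u` is nonadjacent to `b v` iff `uv` is a 2-overlap edge of `G`
(`CircularPair.spanningPair_iff`, `SameEdgeTypes.twoOverlapEdge_iff`).  Thus `H` is represented by the
arcs of `G` and their (slightly shrunk) complements, as soon as the representation of `G` satisfies:
the arc of `u` contains the arc of `v` iff `N[v] ⊆ N[u]`, and the arcs of `u` and `v` are adjacent and
cover the circle iff `uv` is a 2-overlap edge.

*Normalizing a representation of `G`.*  Take a representation by intervals of a finite circle of
points, and choose it with as many incidences between arcs and points as possible.  Then the first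
point beyond either end of the arc of `u` lies in the arc of a nonneighbour of `u`
(`DRep.exists_maxRep`; this uses that `u` is not universal), and this forces the arc of `v` to be
contained in that of `u` when `N[v] ⊆ N[u]` (`MaxRep.subset`), and the arcs of a 2-overlap edge to
cover all points (`MaxRep.cover`).  It remains to order the right ends and left ends falling into the
same gap between consecutive points.  Right ends are ordered by `|N[u]|`; a left end `u` is placed just
above all right ends of nonneighbours of `u` in the gap.  If `v` is a neighbour of `u` with right end
in that gap, then the arcs of `u` and `v` already cover all points, so a nonneighbour of `u` with right
end there has its arc inside that of `v` and a smaller neighbourhood: hence the left end of `u` lies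
below the right end of `v` exactly when `u` and `v` are adjacent (`DRep.leftOffset_le_iff`), and the
resulting representation is as required (`MaxRep.exists_fineRep`).

Whether two arcs meet depends only on comparisons of left ends with right ends (`Meet`), so endpoints
may be taken in any linear order, with coincidences allowed (`isCircularArc_of_meet`).
-/

/-!
Graphs here are finite, undirected, without parallel edges, and have a loop at
every vertex.  We model them as symmetric reflexive relations.
-/

structure LoopGraph (V : Type) where
  Adj : V → V → Prop
  symm : ∀ u v, Adj u v → Adj v u
  refl : ∀ u, Adj u u

namespace LoopGraph

variable {V W : Type}

/-- Closed neighbourhood `N[u]`. -/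
def nbhd (G : LoopGraph V) (u : V) : Set V := {v | G.Adj u v}

/-- `u` is a universal vertex. -/
def Universal (G : LoopGraph V) (u : V) : Prop := ∀ v, G.Adj u v

/-- `u ≠ v` are true twins if `N[u] = N[v]`. -/
def TrueTwins (G : LoopGraph V) (u v : V) : Prop := u ≠ v ∧ G.nbhd u = G.nbhd v

/-- `uv` is an inclusion edge: it is an edge and `N[u] ⊆ N[v]` or `N[v] ⊆ N[u]`. -/
def InclusionEdge (G : LoopGraph V) (u v : V) : Prop :=
  G.Adj u v ∧ (G.nbhd u ⊆ G.nbhd v ∨ G.nbhd v ⊆ G.nbhd u)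

/-- `u` overlaps `v`: they are adjacent and their closed neighbourhoods are incomparable. -/
def Overlaps (G : LoopGraph V) (u v : V) : Prop :=
  G.Adj u v ∧ ¬ G.nbhd u ⊆ G.nbhd v ∧ ¬ G.nbhd v ⊆ G.nbhd u

/-- `{u,v}` is a spanning pair. -/
def SpanningPair (G : LoopGraph V) (u v : V) : Prop :=
  (∀ x, ¬ G.Adj v x → G.nbhd x ⊆ G.nbhd u) ∧
  (∀ y, ¬ G.Adj u y → G.nbhd y ⊆ G.nbhd v)

/-- `uv` is a 2-overlap edge: an overlap edge forming a spanning pair. -/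
def TwoOverlapEdge (G : LoopGraph V) (u v : V) : Prop :=
  G.Overlaps u v ∧ G.SpanningPair u v

/-- `uv` is a 1-overlap edge: an overlap edge not forming a spanning pair. -/
def OneOverlapEdge (G : LoopGraph V) (u v : V) : Prop :=
  G.Overlaps u v ∧ ¬ G.SpanningPair u v

/-- `{u,v}` is a circular pair: a non-adjacent spanning pair. -/
def CircularPair (G : LoopGraph V) (u v : V) : Prop :=
  G.SpanningPair u v ∧ ¬ G.Adj u v

/-- Every vertex belongs to some circular pair. -/
def CircularlyPaired (G : LoopGraph V) : Prop := ∀ u, ∃ v, G.CircularPair u v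

/-- A walk with `k` edges: vertices `P 0, …, P k` with consecutive vertices adjacent. -/
def IsWalk (G : LoopGraph V) (k : ℕ) (P : ℕ → V) : Prop :=
  ∀ i < k, G.Adj (P i) (P (i + 1))

/-- Vertex `z` avoids the edge `ab`: every neighbour of `z` among `a, b` overlaps `z`,
and if `z` overlaps both `a` and `b` then `a, b` do not overlap each other. -/
def AvoidsEdge (G : LoopGraph V) (z a b : V) : Prop :=
  (G.Adj z a → G.Overlaps z a) ∧ (G.Adj z b → G.Overlaps z b) ∧
  (G.Overlaps z a → G.Overlaps z b → ¬ G.Overlaps a b)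

/-- Vertex `z` and the walk `P` (with `k` edges) avoid each other. -/
def AvoidsWalk (G : LoopGraph V) (z : V) (k : ℕ) (P : ℕ → V) : Prop :=
  (∀ i ≤ k, G.Adj z (P i) → G.Overlaps z (P i)) ∧
  (∀ i < k, G.Overlaps z (P i) → G.Overlaps z (P (i + 1)) →
    ¬ G.Overlaps (P i) (P (i + 1)))

/-- The walks `P` and `Q` (both with `k` edges) avoid each other. -/
def WalksAvoid (G : LoopGraph V) (k : ℕ) (P Q : ℕ → V) : Prop :=
  ∀ i < k, G.AvoidsEdge (P i) (Q i) (Q (i + 1)) ∧ G.AvoidsEdge (Q (i + 1)) (P i) (P (i + 1))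

/-- `{x,y}` is a `z`-invertible pair, i.e. an invertible pair anchored at `z`. -/
def ZInvertiblePair (G : LoopGraph V) (z x y : V) : Prop :=
  x ≠ y ∧ x ≠ z ∧ y ≠ z ∧
  ∃ k, ∃ P Q : ℕ → V, G.IsWalk k P ∧ G.IsWalk k Q ∧
    P 0 = x ∧ P k = y ∧ Q 0 = y ∧ Q k = x ∧
    G.WalksAvoid k P Q ∧ G.AvoidsWalk z k P ∧ G.AvoidsWalk z k Q

/-- `G` contains an anchored invertible pair. -/
def HasAnchoredInvertiblePair (G : LoopGraph V) : Prop :=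
  ∃ z x y, G.ZInvertiblePair z x y

end LoopGraph

/-!
Circular arcs: the circle is modelled as the half-open interval `[0,1)`;
an arc is described by its left and right endpoints (clockwise = increasing),
wrapping around if necessary.
-/

/-- Membership of the point `t` in the clockwise arc from `l` to `r`. -/
def arcMem (l r t : ℝ) : Prop :=
  (l ≤ r ∧ l ≤ t ∧ t ≤ r) ∨ (r < l ∧ (l ≤ t ∨ t ≤ r))

/-- The arc `[l₁,r₁]` is contained in the arc `[l₂,r₂]`. -/
def arcSubset (l₁ r₁ l₂ r₂ : ℝ) : Prop :=
  ∀ t ∈ Set.Ico (0 : ℝ) 1, arcMem l₁ r₁ t → arcMem l₂ r₂ t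

/-- The arc `[lu,ru]` properly contains the arc `[lv,rv]`. -/
def arcProperContains (lu ru lv rv : ℝ) : Prop :=
  arcSubset lv rv lu ru ∧ ¬ arcSubset lu ru lv rv

/-- The arcs `[lu,ru]` and `[lv,rv]` together cover the whole circle. -/
def arcsCover (lu ru lv rv : ℝ) : Prop :=
  ∀ t ∈ Set.Ico (0 : ℝ) 1, arcMem lu ru t ∨ arcMem lv rv t

/-- `b` lies strictly between `a` and `c` in the clockwise cyclic order on `[0,1)`. -/
def cycBtw (a b c : ℝ) : Prop :=
  (a < b ∧ b < c) ∨ (b < c ∧ c < a) ∨ (c < a ∧ a < b)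

/-- The four points `a, b, c, d` of `[0,1)` occur in this clockwise cyclic order. -/
def cyc4 (a b c d : ℝ) : Prop := cycBtw a b c ∧ cycBtw a c d

namespace LoopGraph

variable {V W : Type}

/-- `(l, r)` is a circular-arc representation of `G`: all endpoints are distinct and
two vertices are adjacent iff their arcs intersect. -/
def IsCARep (G : LoopGraph V) (l r : V → ℝ) : Prop :=
  (∀ v, l v ∈ Set.Ico (0 : ℝ) 1) ∧ (∀ v, r v ∈ Set.Ico (0 : ℝ) 1) ∧
  Function.Injective (Sum.elim l r) ∧
  ∀ u v, (G.Adj u v ↔ ∃ t ∈ Set.Ico (0 : ℝ) 1,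
    arcMem (l u) (r u) t ∧ arcMem (l v) (r v) t)

/-- `G` is a circular-arc graph. -/
def IsCircularArc (G : LoopGraph V) : Prop := ∃ l r : V → ℝ, G.IsCARep l r

/-- A normalized circular-arc representation of `G`. -/
def IsNormalizedRep (G : LoopGraph V) (l r : V → ℝ) : Prop :=
  G.IsCARep l r ∧
  ∀ u v, G.Adj u v → u ≠ v →
    (arcProperContains (l u) (r u) (l v) (r v) ↔ G.nbhd v ⊆ G.nbhd u) ∧
    (arcsCover (l u) (r u) (l v) (r v) ↔ G.TwoOverlapEdge u v)

/-- A circular-arc representation of the induced subgraph `G[X]` which is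
normalized with respect to `G`. -/
def IsNormalizedRepOn (G : LoopGraph V) (X : Set V) (l r : V → ℝ) : Prop :=
  (∀ v ∈ X, l v ∈ Set.Ico (0 : ℝ) 1) ∧ (∀ v ∈ X, r v ∈ Set.Ico (0 : ℝ) 1) ∧
  Set.InjOn l X ∧ Set.InjOn r X ∧ (∀ u ∈ X, ∀ v ∈ X, l u ≠ r v) ∧
  (∀ u ∈ X, ∀ v ∈ X,
    (G.Adj u v ↔ ∃ t ∈ Set.Ico (0 : ℝ) 1,
      arcMem (l u) (r u) t ∧ arcMem (l v) (r v) t)) ∧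
  (∀ u ∈ X, ∀ v ∈ X, G.Adj u v → u ≠ v →
    (arcProperContains (l u) (r u) (l v) (r v) ↔ G.nbhd v ⊆ G.nbhd u) ∧
    (arcsCover (l u) (r u) (l v) (r v) ↔ G.TwoOverlapEdge u v))

/-! Circular completions. -/

/-- `f` exhibits `G` as an induced subgraph of `H`. -/
def InducedEmb (G : LoopGraph V) (H : LoopGraph W) (f : V → W) : Prop :=
  Function.Injective f ∧ ∀ u v, (G.Adj u v ↔ H.Adj (f u) (f v))

/-- Every edge of `G` has the same type (inclusion / 1-overlap / 2-overlap)
in `G` and in `H`. -/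
def SameEdgeTypes (G : LoopGraph V) (H : LoopGraph W) (f : V → W) : Prop :=
  ∀ u v, G.Adj u v →
    ((G.InclusionEdge u v ↔ H.InclusionEdge (f u) (f v)) ∧
     (G.OneOverlapEdge u v ↔ H.OneOverlapEdge (f u) (f v)) ∧
     (G.TwoOverlapEdge u v ↔ H.TwoOverlapEdge (f u) (f v)))

/-- `H` (with embedding `f`) is a circular completion of `G`: a circularly-paired
graph with the fewest possible vertices containing `G` as an induced subgraph with
all edge types preserved. -/
def IsCircularCompletion (G : LoopGraph V) (H : LoopGraph W) (f : V → W) : Prop :=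
  Finite W ∧ G.InducedEmb H f ∧ G.SameEdgeTypes H f ∧ H.CircularlyPaired ∧
  ∀ (W' : Type) (H' : LoopGraph W') (f' : V → W'), Finite W' →
    G.InducedEmb H' f' → G.SameEdgeTypes H' f' → H'.CircularlyPaired →
    Nat.card W ≤ Nat.card W'

/-! The anchored Δ-knotting graph. -/

/-- `A(z)`: vertices nonadjacent to `z` or overlapping `z`. -/
def Aset (G : LoopGraph V) (z : V) : Set V := {u | ¬ G.Adj z u ∨ G.Overlaps z u}

/-- `x` and `y` are `uz`-connected. -/
def UZConnected (G : LoopGraph V) (u z x y : V) : Prop :=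
  ¬ G.InclusionEdge x u ∧ ¬ G.InclusionEdge y u ∧ ¬ G.InclusionEdge x z ∧
  ¬ G.InclusionEdge y z ∧ ¬ G.InclusionEdge u z ∧
  ∃ k, ∃ P : ℕ → V, G.IsWalk k P ∧ P 0 = x ∧ P k = y ∧
    G.AvoidsWalk u k P ∧ G.AvoidsWalk z k P

/-- `X` is a `uz`-component: a maximal set of pairwise `uz`-connected vertices. -/
def IsUZComponent (G : LoopGraph V) (u z : V) (X : Set V) : Prop :=
  X.Nonempty ∧ (∀ x ∈ X, ∀ y ∈ X, G.UZConnected u z x y) ∧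
  ∀ Y : Set V, X ⊆ Y → (∀ x ∈ Y, ∀ y ∈ Y, G.UZConnected u z x y) → Y = X

/-- Vertices of the `z`-anchored Δ-knotting graph: copies `(u, X)` of `u ∈ A(z)`,
one for each `uz`-component `X`. -/
def KnotVertex (G : LoopGraph V) (z : V) (p : V × Set V) : Prop :=
  p.1 ∈ G.Aset z ∧ G.IsUZComponent p.1 z p.2

/-- Edges of the `z`-anchored Δ-knotting graph: for each edge `uv` of `G` with
`u, v ∈ A(z)`, an edge between the copy of `u` for `X` and the copy of `v` for `Y`
whenever `v ∈ X` and `u ∈ Y`. -/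
def KnotAdj (G : LoopGraph V) (z : V) (p q : V × Set V) : Prop :=
  G.Adj p.1 q.1 ∧ p.1 ∈ G.Aset z ∧ q.1 ∈ G.Aset z ∧ q.1 ∈ p.2 ∧ p.1 ∈ q.2

/-- The `z`-anchored Δ-knotting graph of `G` is bipartite (it is 2-colourable). -/
def KnotBipartite (G : LoopGraph V) (z : V) : Prop :=
  ∃ c : V × Set V → Bool, ∀ p q, G.KnotVertex z p → G.KnotVertex z q →
    G.KnotAdj z p q → c p ≠ c q

/-! Non-inverting sets. -/

/-- `X` is a non-inverting set of `G`. -/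
def NonInvertingSet (G : LoopGraph V) (X : Set V) : Prop :=
  (∀ u ∈ X, ∀ v ∈ X, ¬ G.TwoOverlapEdge u v) ∧
  ¬ ∃ x ∈ X, ∃ y ∈ X, ∃ k, 0 < k ∧ ∃ P Q : ℕ → V,
      G.IsWalk k P ∧ G.IsWalk k Q ∧ (∀ i ≤ k, P i ∈ X) ∧ (∀ i ≤ k, Q i ∈ X) ∧
      P 0 = x ∧ P k = y ∧ Q 0 = y ∧ Q k = x ∧ G.WalksAvoid k P Q

end LoopGraph

/-!
Edge-labelled graphs: graphs (with loops) in which every edge is labelled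
inclusion or overlap, loops being labelled inclusion.
-/

structure ELGraph (V : Type) where
  Adj : V → V → Prop
  symm : ∀ u v, Adj u v → Adj v u
  refl : ∀ u, Adj u u
  /-- `Ovl u v` means the edge `uv` is labelled as an overlap edge. -/
  Ovl : V → V → Prop
  ovl_symm : ∀ u v, Ovl u v → Ovl v u
  ovl_adj : ∀ u v, Ovl u v → Adj u v
  ovl_irrefl : ∀ u, ¬ Ovl u u

namespace ELGraph

variable {V : Type}

/-- Closed neighbourhood `N[u]`. -/
def nbhd (G : ELGraph V) (u : V) : Set V := {v | G.Adj u v}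

/-- `uv` is (labelled as) an inclusion edge. -/
def InclEdge (G : ELGraph V) (u v : V) : Prop := G.Adj u v ∧ ¬ G.Ovl u v

/-- A walk with `k` edges. -/
def IsWalk (G : ELGraph V) (k : ℕ) (P : ℕ → V) : Prop :=
  ∀ i < k, G.Adj (P i) (P (i + 1))

/-- `z` avoids the edge `ab`: every neighbour of `z` among `a, b` overlaps `z`, and if
`z` overlaps both `a` and `b` then the edge `ab` is an inclusion edge. -/
def AvoidsEdge (G : ELGraph V) (z a b : V) : Prop :=
  (G.Adj z a → G.Ovl z a) ∧ (G.Adj z b → G.Ovl z b) ∧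
  (G.Ovl z a → G.Ovl z b → ¬ G.Ovl a b)

/-- The walks `P` and `Q` (both with `k` edges) avoid each other. -/
def WalksAvoid (G : ELGraph V) (k : ℕ) (P Q : ℕ → V) : Prop :=
  ∀ i < k, G.AvoidsEdge (P i) (Q i) (Q (i + 1)) ∧ G.AvoidsEdge (Q (i + 1)) (P i) (P (i + 1))

/-- The ordered pair `p` is related to the ordered pair `q`: there exist a walk from
`p.1` to `q.1` and a walk from `p.2` to `q.2`, of the same (positive) length, that
avoid each other. -/
def Related (G : ELGraph V) (p q : V × V) : Prop :=
  ∃ k, 0 < k ∧ ∃ P Q : ℕ → V, G.IsWalk k P ∧ G.IsWalk k Q ∧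
    P 0 = p.1 ∧ Q 0 = p.2 ∧ P k = q.1 ∧ Q k = q.2 ∧ G.WalksAvoid k P Q

/-- A Δ-implication class: a maximal set of pairwise related ordered pairs. -/
def IsDeltaClass (G : ELGraph V) (A : Set (V × V)) : Prop :=
  A.Nonempty ∧ (∀ p ∈ A, ∀ q ∈ A, G.Related p q) ∧
  ∀ B : Set (V × V), A ⊆ B → (∀ p ∈ B, ∀ q ∈ B, G.Related p q) → B = A

/-- `A⁻¹ = {(u,v) : (v,u) ∈ A}`. -/
def inv (A : Set (V × V)) : Set (V × V) := {p | p.swap ∈ A}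

/-- `span A`: the set of vertices incident to pairs of `A`. -/
def span (A : Set (V × V)) : Set V := {v | ∃ p ∈ A, v = p.1 ∨ v = p.2}

/-- `S` induces a clique. -/
def IsClique (G : ELGraph V) (S : Set V) : Prop := ∀ a ∈ S, ∀ b ∈ S, G.Adj a b

/-- A Δ-module. -/
def IsDeltaModule (G : ELGraph V) (S : Set V) : Prop :=
  S.Nonempty ∧
  (∀ x, x ∉ S →
    ((∀ s ∈ S, ¬ G.Adj x s) ∨ (∀ s ∈ S, G.InclEdge x s) ∨ (∀ s ∈ S, G.Ovl x s))) ∧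
  (¬ G.IsClique S → ∀ x, x ∉ S → ∀ s ∈ S, ¬ G.Ovl x s)

/-- A trivial Δ-module: the whole vertex set or a single vertex. -/
def TrivialModule (S : Set V) : Prop := S = Set.univ ∨ ∃ a : V, S = {a}

/-- `{a,b}` is a Δ-invertible pair: `(a,b)` is related to `(b,a)`. -/
def DeltaInvertiblePair (G : ELGraph V) (a b : V) : Prop := G.Related (a, b) (b, a)

/-- An interval ordering of an edge-labelled graph. -/
def IsIntervalOrdering (G : ELGraph V) (lt : V → V → Prop) : Prop :=
  IsStrictTotalOrder V lt ∧
  ¬ ∃ a b c, lt a b ∧ lt b c ∧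
    ((¬ G.Adj a b ∧ G.Adj a c) ∨
     (G.InclEdge a b ∧ ¬ G.Adj a c ∧ G.Adj b c) ∨
     (G.Ovl a b ∧ G.Adj a c ∧ ¬ G.Adj b c) ∨
     (G.Ovl a b ∧ G.Ovl b c ∧ G.InclEdge a c) ∨
     (G.InclEdge a b ∧ G.InclEdge b c ∧ G.Ovl a c))

/-- An interval representation of `G` consistent with its labelling. -/
def IsConsistentIntervalRep (G : ELGraph V) (l r : V → ℝ) : Prop :=
  (∀ v, l v ≤ r v) ∧
  (∀ u v, (G.Adj u v ↔ (Set.Icc (l u) (r u) ∩ Set.Icc (l v) (r v)).Nonempty)) ∧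
  (∀ u v, (G.Ovl u v ↔
    ((Set.Icc (l u) (r u) ∩ Set.Icc (l v) (r v)).Nonempty ∧
     ¬ Set.Icc (l u) (r u) ⊆ Set.Icc (l v) (r v) ∧
     ¬ Set.Icc (l v) (r v) ⊆ Set.Icc (l u) (r u))))

/-- A consistently edge-labelled graph: there is a transitive orientation `D` of its
inclusion edges (between distinct vertices) such that `D u v → N[v] ⊆ N[u]`. -/
def ConsistentlyLabelled (G : ELGraph V) : Prop :=
  ∃ D : V → V → Prop,
    (∀ u v, D u v → u ≠ v ∧ G.InclEdge u v) ∧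
    (∀ u v, u ≠ v → G.InclEdge u v → (D u v ↔ ¬ D v u)) ∧
    (∀ u v w, D u v → D v w → D u w) ∧
    (∀ u v, D u v → G.nbhd v ⊆ G.nbhd u)

end ELGraph


/-! ### Arcs with endpoints in a linear order -/

/-- The condition for two arcs to meet, where `A`, `B` say that the arcs `[l₁,r₁]`, `[l₂,r₂]` do not
wrap around (`l₁ ≤ r₁`, `l₂ ≤ r₂`), and `c`, `d` stand for `l₁ ≤ r₂` and `l₂ ≤ r₁`: both of `c`, `d`
are needed if neither arc wraps around, one of them if exactly one does, none if both do. -/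
def Meet (A B c d : Prop) : Prop := (A ∧ B → c ∧ d) ∧ (A ∨ B → c ∨ d)

lemma exists_arcMem_iff_meet {lu ru lv rv : ℝ} (hlu : lu ∈ Set.Ico (0 : ℝ) 1)
    (hru : ru ∈ Set.Ico (0 : ℝ) 1) (hlv : lv ∈ Set.Ico (0 : ℝ) 1)
    (hrv : rv ∈ Set.Ico (0 : ℝ) 1) :
    (∃ t ∈ Set.Ico (0 : ℝ) 1, arcMem lu ru t ∧ arcMem lv rv t) ↔
      Meet (lu ≤ ru) (lv ≤ rv) (lu ≤ rv) (lv ≤ ru) := by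
  simp only [Set.mem_Ico] at *
  unfold arcMem Meet
  constructor
  · rintro ⟨t, -, h1, h2⟩
    grind
  · rintro ⟨h1, h2⟩
    by_cases hu : lu ≤ ru <;> by_cases hv : lv ≤ rv
    · refine ⟨max lu lv, ?_, ?_, ?_⟩ <;> grind
    · by_cases h : lv ≤ ru
      · refine ⟨max lu lv, ?_, ?_, ?_⟩ <;> grind
      · refine ⟨lu, ?_, ?_, ?_⟩ <;> grind
    · by_cases h : lu ≤ rv
      · refine ⟨max lu lv, ?_, ?_, ?_⟩ <;> grind
      · refine ⟨lv, ?_, ?_, ?_⟩ <;> grind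
    · refine ⟨0, ?_, ?_, ?_⟩ <;> grind

/-- Membership of the point `t` in the cyclic half-open interval `(p, r]` of natural numbers below a
bound, wrapping around if `r < p`.  The interval is empty if `p = r`. Its complement is `(r, p]`. -/
def cmem (p r t : ℕ) : Prop := (p < r ∧ p < t ∧ t ≤ r) ∨ (r < p ∧ (p < t ∨ t ≤ r))

lemma exists_cmem_iff_meet {M pu ru pv rv : ℕ} (hpu : pu < M) (hru : ru < M) (hpv : pv < M)
    (hrv : rv < M) (hu : pu ≠ ru) (hv : pv ≠ rv) :
    (∃ t < M, cmem pu ru t ∧ cmem pv rv t) ↔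
      Meet (pu < ru) (pv < rv) (pu < rv) (pv < ru) := by
  unfold cmem Meet
  constructor
  · rintro ⟨t, -, h1, h2⟩
    omega
  · rintro ⟨h1, h2⟩
    by_cases hu : pu < ru <;> by_cases hv : pv < rv
    · exact ⟨max pu pv + 1, by omega, by omega, by omega⟩
    · by_cases h : pv < ru
      · exact ⟨max pu pv + 1, by omega, by omega, by omega⟩
      · exact ⟨pu + 1, by omega, by omega, by omega⟩
    · by_cases h : pu < rv
      · exact ⟨max pu pv + 1, by omega, by omega, by omega⟩
      · exact ⟨pv + 1, by omega, by omega, by omega⟩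
    · exact ⟨0, by omega, by omega, by omega⟩

/-- Finitely many elements of a linear order can be replaced by their ranks. -/
lemma exists_rank {ι β : Type*} [Fintype ι] [LinearOrder β] (k : ι → β) :
    ∃ ρ : ι → ℕ, (∀ i, ρ i < Fintype.card ι) ∧ ∀ i j, ρ i < ρ j ↔ k i < k j := by
  classical
  have mono : ∀ i j, k i ≤ k j →
      (Finset.univ.filter fun x => k x < k i) ⊆ (Finset.univ.filter fun x => k x < k j) := by
    intro i j h x
    simp only [Finset.mem_filter, Finset.mem_univ, true_and]
    exact fun hx => hx.trans_le h
  refine ⟨fun i => (Finset.univ.filter fun x => k x < k i).card, fun i => ?_, fun i j => ?_⟩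
  · exact Finset.card_lt_univ_of_notMem (x := i) (by simp)
  · constructor
    · intro h
      by_contra hc
      exact absurd (Finset.card_le_card (mono j i (not_lt.1 hc))) (not_le.2 h)
    · intro h
      refine Finset.card_lt_card ⟨mono i j h.le, fun hs => ?_⟩
      simpa using hs (by simpa using h : i ∈ Finset.univ.filter fun x => k x < k j)

namespace LoopGraph

variable {V W : Type}

/-- Arcs with endpoints in any linear order suffice: coinciding endpoints are separated by putting
left ends before right ends, which keeps every comparison `l u ≤ r v`. -/
lemma isCircularArc_of_meet {α : Type} [LinearOrder α] [Finite W] (H : LoopGraph W)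
    (l r : W → α)
    (h : ∀ u v, H.Adj u v ↔ Meet (l u ≤ r u) (l v ≤ r v) (l u ≤ r v) (l v ≤ r u)) :
    H.IsCircularArc := by
  have := Fintype.ofFinite W
  let e : W → ℕ := fun w => Fintype.equivFin W w
  have he : Function.Injective e := Fin.val_injective.comp (Fintype.equivFin W).injective
  -- Tags 0 and 1 put left ends before right ends; `e` separates endpoints of the same kind.
  let k : W ⊕ W → α ×ₗ ℕ ×ₗ ℕ := Sum.elim (fun w => toLex (l w, toLex (0, e w)))
    (fun w => toLex (r w, toLex (1, e w)))
  have hk : Function.Injective k := by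
    rintro (a | a) (b | b) hab <;>
      simp only [k, Sum.elim_inl, Sum.elim_inr, EmbeddingLike.apply_eq_iff_eq, Prod.mk.injEq] at hab
    · rw [he hab.2.2]
    · omega
    · omega
    · rw [he hab.2.2]
  obtain ⟨ρ, hρ, hρk⟩ := exists_rank k
  set N := Fintype.card (W ⊕ W)
  let c : W ⊕ W → ℝ := fun i => (ρ i : ℝ) / (N + 1)
  have hN : (0 : ℝ) < N + 1 := by positivity
  have hc : ∀ i, c i ∈ Set.Ico (0 : ℝ) 1 := by
    intro i
    refine ⟨by positivity, ?_⟩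
    rw [div_lt_one hN]
    exact_mod_cast (hρ i).trans (Nat.lt_succ_self N)
  have hlt : ∀ i j, c i < c j ↔ k i < k j := by
    intro i j
    rw [← hρk, div_lt_div_iff_of_pos_right hN, Nat.cast_lt]
  have hcinj : Function.Injective c := by
    intro i j hij
    apply hk
    apply le_antisymm
    · exact not_lt.1 fun h' => ((hlt j i).2 h').ne' hij
    · exact not_lt.1 fun h' => ((hlt i j).2 h').ne hij
  have hlr : ∀ u v, c (Sum.inl u) ≤ c (Sum.inr v) ↔ l u ≤ r v := by
    intro u v
    have hne : c (Sum.inl u) ≠ c (Sum.inr v) := fun h' => by simpa using hcinj h'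
    rw [hne.le_iff_lt, hlt]
    simp only [k, Sum.elim_inl, Sum.elim_inr, Prod.Lex.toLex_lt_toLex, zero_lt_one, true_or,
      and_true]
    exact le_iff_lt_or_eq.symm
  refine ⟨fun w => c (Sum.inl w), fun w => c (Sum.inr w), fun _ => hc _, fun _ => hc _, ?_, ?_⟩
  · convert hcinj using 1
    funext i
    cases i <;> rfl
  · intro u v
    rw [exists_arcMem_iff_meet (hc _) (hc _) (hc _) (hc _), h]
    simp only [hlr]

/-! ### Representations on a finite circle of points -/

/-- A discrete representation of `G`: each vertex `u` is assigned the nonempty, non-full cyclic interval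
`(p u, r u]` of the points `0, …, M - 1`, and adjacency means sharing a point. Endpoints of different
vertices may coincide. -/
structure DRep (G : LoopGraph V) (M : ℕ) (p r : V → ℕ) : Prop where
  p_lt : ∀ u, p u < M
  r_lt : ∀ u, r u < M
  ne : ∀ u, p u ≠ r u
  adj : ∀ u v, G.Adj u v ↔ ∃ t < M, cmem (p u) (r u) t ∧ cmem (p v) (r v) t

lemma IsCircularArc.exists_dRep [Finite V] {G : LoopGraph V} (h : G.IsCircularArc) :
    ∃ M p r, G.DRep M p r := by
  have := Fintype.ofFinite V
  obtain ⟨l, r, hl, hr, hinj, hadj⟩ := h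
  obtain ⟨ρ, hρ, hρk⟩ := exists_rank (Sum.elim l r)
  have hne : ∀ u v, l u ≠ r v := fun u v h' => by
    simpa using @hinj (Sum.inl u) (Sum.inr v) h'
  have key : ∀ u v, ρ (Sum.inl u) < ρ (Sum.inr v) ↔ l u ≤ r v := fun u v => by
    rw [hρk, (hne u v).le_iff_lt]
    rfl
  have hne' : ∀ u, ρ (Sum.inl u) ≠ ρ (Sum.inr u) := by
    intro u h'
    have h1 := hρk (Sum.inl u) (Sum.inr u)
    have h2 := hρk (Sum.inr u) (Sum.inl u)
    simp only [h', lt_irrefl, false_iff, not_lt, Sum.elim_inl, Sum.elim_inr] at h1 h2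
    exact hne u u (le_antisymm h2 h1)
  refine ⟨_, fun u => ρ (Sum.inl u), fun u => ρ (Sum.inr u), fun _ => hρ _, fun _ => hρ _,
    hne', fun u v => ?_⟩
  rw [hadj, exists_arcMem_iff_meet (hl _) (hr _) (hl _) (hr _),
    exists_cmem_iff_meet (hρ _) (hρ _) (hρ _) (hρ _) (hne' u) (hne' v)]
  simp only [key]

/-- The cyclic successor of the point `t < M`. -/
def csucc (M t : ℕ) : ℕ := if t + 1 = M then 0 else t + 1

/-- The cyclic predecessor of the point `t < M`. -/
def cpred (M t : ℕ) : ℕ := if t = 0 then M - 1 else t - 1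

/-- A discrete representation in which no arc can be enlarged by one point: the point following the
arc of `u`, which is `csucc M (r u)`, and the point preceding it, which is `p u`, both lie in arcs of
nonneighbours of `u`. -/
structure MaxRep (G : LoopGraph V) (M : ℕ) (p r : V → ℕ) : Prop extends DRep G M p r where
  rmax : ∀ u, ∃ w, ¬ G.Adj u w ∧ cmem (p w) (r w) (csucc M (r u))
  lmax : ∀ u, ∃ w, ¬ G.Adj u w ∧ cmem (p w) (r w) (p u)

open Classical in
/-- The number of incidences between arcs and points. -/
noncomputable def coverCount [Fintype V] (M : ℕ) (p r : V → ℕ) : ℕ :=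
  ∑ u, ((Finset.range M).filter fun t => cmem (p u) (r u) t).card

open Classical in
/-- Enlarging the arc of `u` by a point `s` all of whose vertices are neighbours of `u` does not change
the represented graph. -/
lemma DRep.extend [Fintype V] {G : LoopGraph V} {M : ℕ} {p r : V → ℕ} (h : G.DRep M p r)
    (u : V) {a b s : ℕ} (ha : a < M) (hb : b < M) (hab : a ≠ b) (hs : s < M)
    (hsu : ¬ cmem (p u) (r u) s)
    (hD : ∀ t < M, cmem a b t ↔ cmem (p u) (r u) t ∨ t = s)
    (hadj : ∀ w, cmem (p w) (r w) s → G.Adj u w) :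
    G.DRep M (Function.update p u a) (Function.update r u b) ∧
      coverCount M p r < coverCount M (Function.update p u a) (Function.update r u b) := by
  have key : ∀ w, w ≠ u → (G.Adj u w ↔ ∃ t < M, cmem a b t ∧ cmem (p w) (r w) t) := by
    intro w _
    constructor
    · intro huw
      obtain ⟨t, ht, h1, h2⟩ := (h.adj u w).1 huw
      exact ⟨t, ht, (hD t ht).2 (Or.inl h1), h2⟩
    · rintro ⟨t, ht, h1, h2⟩
      rcases (hD t ht).1 h1 with h1 | rfl
      · exact (h.adj u w).2 ⟨t, ht, h1, h2⟩
      · exact hadj w h2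
  have hsD : cmem a b s := (hD s hs).2 (Or.inr rfl)
  refine ⟨⟨fun w => ?_, fun w => ?_, fun w => ?_, fun w w' => ?_⟩, ?_⟩
  · by_cases hw : w = u
    · subst hw; simpa using ha
    · simpa [hw] using h.p_lt w
  · by_cases hw : w = u
    · subst hw; simpa using hb
    · simpa [hw] using h.r_lt w
  · by_cases hw : w = u
    · subst hw; simpa using hab
    · simpa [hw] using h.ne w
  · by_cases hw : w = u <;> by_cases hw' : w' = u
    · subst hw; subst hw'
      simp only [Function.update_self]
      exact ⟨fun _ => ⟨s, hs, hsD, hsD⟩, fun _ => G.refl _⟩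
    · subst hw
      simpa [hw'] using key w' hw'
    · subst hw'
      have := key w hw
      simp only [Function.update_self, ne_eq, hw, not_false_eq_true, Function.update_of_ne]
      rw [show G.Adj w w' ↔ G.Adj w' w from ⟨G.symm _ _, G.symm _ _⟩, this]
      simp only [and_comm]
    · simpa [hw, hw'] using h.adj w w'
  · unfold coverCount
    refine Finset.sum_lt_sum (fun w _ => ?_) ⟨u, Finset.mem_univ _, ?_⟩
    · by_cases hw : w = u
      · subst hw
        refine Finset.card_le_card fun t => ?_
        simp only [Finset.mem_filter, Finset.mem_range, Function.update_self]
        exact fun ht => ⟨ht.1, (hD t ht.1).2 (Or.inl ht.2)⟩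
      · simp [hw]
    · refine Finset.card_lt_card ⟨fun t => ?_, fun hsub => ?_⟩
      · simp only [Finset.mem_filter, Finset.mem_range, Function.update_self]
        exact fun ht => ⟨ht.1, (hD t ht.1).2 (Or.inl ht.2)⟩
      · have := hsub (show s ∈ _ by
          simpa only [Finset.mem_filter, Finset.mem_range, Function.update_self] using ⟨hs, hsD⟩)
        simp only [Finset.mem_filter, Finset.mem_range] at this
        exact hsu this.2

/-- If the arc of `u` missed only the point `p u` and all arcs through that point belonged to neighbours
of `u`, then `u` would be universal. -/
lemma DRep.csucc_ne {G : LoopGraph V} {M : ℕ} {p r : V → ℕ} (h : G.DRep M p r) (u : V)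
    (hu : ¬ G.Universal u) (hadj : ∀ w, cmem (p w) (r w) (p u) → G.Adj u w) :
    csucc M (r u) ≠ p u := by
  intro hc
  refine hu fun w => ?_
  obtain ⟨t, ht, ht', -⟩ := (h.adj w w).1 (G.refl w)
  by_cases htp : t = p u
  · exact hadj w (htp ▸ ht')
  · refine (h.adj u w).2 ⟨t, ht, ?_, ht'⟩
    have h1 := h.p_lt u
    have h2 := h.r_lt u
    have h3 := h.ne u
    unfold csucc at hc
    unfold cmem
    split_ifs at hc <;> omega

lemma DRep.exists_maxRep [Finite V] {G : LoopGraph V} (hu : ∀ u, ¬ G.Universal u)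
    {M : ℕ} {p₀ r₀ : V → ℕ} (h₀ : G.DRep M p₀ r₀) : ∃ p r, G.MaxRep M p r := by
  classical
  have := Fintype.ofFinite V
  let S : Set ℕ := {k | ∃ p r, G.DRep M p r ∧ coverCount M p r = k}
  have hne : S.Nonempty := ⟨_, p₀, r₀, h₀, rfl⟩
  have hbdd : BddAbove S := by
    refine ⟨∑ _u : V, M, ?_⟩
    rintro k ⟨p, r, -, rfl⟩
    refine Finset.sum_le_sum fun u _ => ?_
    exact (Finset.card_filter_le _ _).trans (Finset.card_range M).le
  obtain ⟨p, r, h, hk⟩ := Nat.sSup_mem hne hbdd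
  have hmax : ∀ p' r', G.DRep M p' r' → coverCount M p' r' ≤ coverCount M p r :=
    fun p' r' h' => hk ▸ le_csSup hbdd ⟨p', r', h', rfl⟩
  refine ⟨p, r, h, fun u => ?_, fun u => ?_⟩
  · by_contra! hc
    have hc' : ∀ w, cmem (p w) (r w) (csucc M (r u)) → G.Adj u w :=
      fun w hw => by_contra fun hn => hc w hn hw
    have h1 := h.p_lt u
    have h2 := h.r_lt u
    have h3 := h.ne u
    have hsne : csucc M (r u) ≠ p u := fun he =>
      h.csucc_ne u (hu u) (fun w hw => hc' w (he.symm ▸ hw)) he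
    have := h.extend u (a := p u) (b := csucc M (r u)) (s := csucc M (r u)) h1
      (by unfold csucc; split_ifs <;> omega) hsne.symm
      (by unfold csucc; split_ifs <;> omega)
      (by unfold csucc at *; unfold cmem; split_ifs at * <;> omega)
      (by intro t ht; unfold csucc at *; unfold cmem; split_ifs at * <;> omega) hc'
    exact absurd (hmax _ _ this.1) (not_le.2 this.2)
  · by_contra! hc
    have hc' : ∀ w, cmem (p w) (r w) (p u) → G.Adj u w :=
      fun w hw => by_contra fun hn => hc w hn hw
    have h1 := h.p_lt u
    have h2 := h.r_lt u
    have h3 := h.ne u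
    have hsne : csucc M (r u) ≠ p u := h.csucc_ne u (hu u) hc'
    have := h.extend u (a := cpred M (p u)) (b := r u) (s := p u)
      (by unfold cpred; split_ifs <;> omega) h2
      (by unfold csucc at *; unfold cpred; split_ifs at * <;> omega) h1
      (by unfold cmem; omega)
      (by intro t ht; unfold csucc at *; unfold cpred cmem; split_ifs at * <;> omega) hc'
    exact absurd (hmax _ _ this.1) (not_le.2 this.2)

/-- A cyclic interval that meets another one without being contained in it contains one of the two
points next to the latter. -/
lemma csucc_mem_or_mem_of_not_subset {M pu ru pv rv s t : ℕ} (hpu : pu < M) (hru : ru < M)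
    (hsu : cmem pu ru s) (hsv : cmem pv rv s) (ht : t < M)
    (htu : ¬ cmem pu ru t) (htv : cmem pv rv t) :
    cmem pv rv (csucc M ru) ∨ cmem pv rv pu := by
  unfold cmem csucc at *
  split_ifs <;> omega

/-- Otherwise the arc of `v` would contain a point next to the arc of `u`, hence meet the arc of a
nonneighbour of `u`. -/
lemma MaxRep.subset {G : LoopGraph V} {M : ℕ} {p r : V → ℕ} (h : G.MaxRep M p r) {u v : V}
    (hvu : G.nbhd v ⊆ G.nbhd u) {t : ℕ} (ht : t < M) (htv : cmem (p v) (r v) t) :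
    cmem (p u) (r u) t := by
  by_contra htu
  have huv : G.Adj u v := hvu (G.refl v)
  obtain ⟨s, -, hsu, hsv⟩ := (h.adj u v).1 huv
  rcases csucc_mem_or_mem_of_not_subset (h.p_lt u) (h.r_lt u) hsu hsv ht htu htv with h1 | h1
  · obtain ⟨w, hw, hw'⟩ := h.rmax u
    refine hw (hvu ((h.adj v w).2 ⟨_, ?_, h1, hw'⟩))
    have := h.r_lt u
    unfold csucc; split_ifs <;> omega
  · obtain ⟨w, hw, hw'⟩ := h.lmax u
    exact hw (hvu ((h.adj v w).2 ⟨_, h.p_lt u, h1, hw'⟩))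

lemma DRep.nbhd_subset {G : LoopGraph V} {M : ℕ} {p r : V → ℕ} (h : G.DRep M p r) {u v : V}
    (hvu : ∀ t < M, cmem (p v) (r v) t → cmem (p u) (r u) t) : G.nbhd v ⊆ G.nbhd u := by
  intro w hw
  obtain ⟨t, ht, h1, h2⟩ := (h.adj v w).1 hw
  exact (h.adj u w).2 ⟨t, ht, hvu t ht h1, h2⟩

/-- If `(pv, rv]` contains both points next to `(pu, ru]` but misses some point outside `(pu, ru]`, then
it contains `(pu, ru]`. -/
lemma subset_of_csucc_mem {M pu ru pv rv t : ℕ} (hpu : pu < M) (hru : ru < M)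
    (ht : t < M) (htu : ¬ cmem pu ru t) (htv : ¬ cmem pv rv t)
    (h1 : cmem pv rv (csucc M ru)) (h2 : cmem pv rv pu) {x : ℕ}
    (hxu : cmem pu ru x) : cmem pv rv x := by
  unfold cmem csucc at *
  split_ifs at * <;> omega

/-- The nonneighbours of `u` witnessing maximality have their arcs inside that of `v`, so `v` contains
both points next to `u`; a point missed by both arcs would give `N[u] ⊆ N[v]`. -/
lemma MaxRep.cover {G : LoopGraph V} {M : ℕ} {p r : V → ℕ} (h : G.MaxRep M p r) {u v : V}
    (huv : G.TwoOverlapEdge u v) {t : ℕ} (ht : t < M) :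
    cmem (p u) (r u) t ∨ cmem (p v) (r v) t := by
  by_contra! hc
  obtain ⟨⟨-, hnuv, -⟩, -, hsp⟩ := huv
  have hcs : csucc M (r u) < M := by
    have := h.r_lt u
    unfold csucc; split_ifs <;> omega
  have h1 : cmem (p v) (r v) (csucc M (r u)) := by
    obtain ⟨w, hw, hw'⟩ := h.rmax u
    exact h.subset (hsp w hw) hcs hw'
  have h2 : cmem (p v) (r v) (p u) := by
    obtain ⟨w, hw, hw'⟩ := h.lmax u
    exact h.subset (hsp w hw) (h.p_lt u) hw'
  exact hnuv (h.nbhd_subset fun _ _ =>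
    subset_of_csucc_mem (h.p_lt u) (h.r_lt u) ht hc.1 hc.2 h1 h2)

/-! ### Normalized representations -/

/-- A representation of `G` by arcs `[L u, R u]` such that the formulas for `Meet` applied to arcs and
to their complements `(R u, L u)` describe neighbourhood inclusions and 2-overlap edges.  The comparisons
are strict wherever a complement is involved, as it does not contain its endpoints. -/
structure FineRep {α : Type} [LinearOrder α] (G : LoopGraph V) (L R : V → α) : Prop where
  adj : ∀ u v, G.Adj u v ↔ Meet (L u ≤ R u) (L v ≤ R v) (L u ≤ R v) (L v ≤ R u)
  compl_left : ∀ u v, ¬ Meet (R u < L u) (L v ≤ R v) (R u < R v) (L v < L u) ↔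
    G.nbhd v ⊆ G.nbhd u
  compl_compl : ∀ u v, ¬ Meet (R u < L u) (R v < L v) (R u < L v) (R v < L u) ↔
    G.TwoOverlapEdge u v

/-- In any representation of a graph without universal vertices, containment of arcs implies inclusion
of neighbourhoods, and two arcs that cover the circle belong to a 2-overlap edge. -/
lemma fineRep_of_imp {α : Type} [LinearOrder α] {G : LoopGraph V}
    (hu : ∀ u, ¬ G.Universal u) {L R : V → α}
    (h1 : ∀ u v, G.Adj u v ↔ Meet (L u ≤ R u) (L v ≤ R v) (L u ≤ R v) (L v ≤ R u))
    (h2 : ∀ u v, G.nbhd v ⊆ G.nbhd u →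
      ¬ Meet (R u < L u) (L v ≤ R v) (R u < R v) (L v < L u))
    (h3 : ∀ u v, G.TwoOverlapEdge u v →
      ¬ Meet (R u < L u) (R v < L v) (R u < L v) (R v < L u)) :
    G.FineRep L R := by
  have h2' : ∀ u v, ¬ Meet (R u < L u) (L v ≤ R v) (R u < R v) (L v < L u) →
      G.nbhd v ⊆ G.nbhd u := by
    intro u v h w (hw : G.Adj v w)
    change G.Adj u w
    rw [h1] at hw ⊢
    unfold Meet at *
    grind
  have hspan : ∀ u v, ¬ Meet (R u < L u) (R v < L v) (R u < L v) (R v < L u) →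
      ∀ x, ¬ G.Adj v x → G.nbhd x ⊆ G.nbhd u := by
    intro u v h x hx
    apply h2'
    rw [h1] at hx
    unfold Meet at *
    grind
  refine ⟨h1, fun u v => ⟨h2' u v, h2 u v⟩, fun u v => ⟨fun h => ?_, h3 u v⟩⟩
  have h' : ¬ Meet (R v < L v) (R u < L u) (R v < L u) (R u < L v) := by
    unfold Meet at *
    tauto
  refine ⟨⟨?_, fun hs => ?_, fun hs => ?_⟩, hspan u v h, hspan v u h'⟩
  · rw [h1]
    unfold Meet at *
    grind
  · refine hu v fun x => by_contra fun hx => hx (hs (hspan u v h x hx (G.refl x)))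
  · refine hu u fun x => by_contra fun hx => hx (hs (hspan v u h' x hx (G.refl x)))

open Classical in
/-- The height of the left end of `u` within the gap `p u`: one more than the largest height `|N[v]|`
of a right end in this gap that belongs to a nonneighbour `v` of `u`, and `0` if there is none. -/
noncomputable def leftOffset [Fintype V] (G : LoopGraph V) (p r : V → ℕ) (u : V) : ℕ :=
  (Finset.univ.filter fun v => r v = p u ∧ ¬ G.Adj u v).sup fun v => (G.nbhd v).ncard + 1

/-- If `(pu, ru]` meets `(pv, pu]`, then the two cover the circle, so an interval `(pv', pu]` disjoint from
the first is contained in the second. -/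
lemma subset_of_disjoint {M pu ru rv pv rv' pv' s t : ℕ} (hpu : pu < M)
    (hrv : rv = pu) (hrv' : rv' = pu) (hsu : cmem pu ru s) (hsv : cmem pv rv s)
    (hd : ¬ ∃ t < M, cmem pu ru t ∧ cmem pv' rv' t) (ht : t < M) (htv : cmem pv' rv' t) :
    cmem pv rv t := by
  have hd' : ¬ cmem pu ru t := fun h => hd ⟨t, ht, h, htv⟩
  subst hrv; subst hrv'
  unfold cmem at *
  omega

lemma DRep.leftOffset_le_iff [Fintype V] {G : LoopGraph V} {M : ℕ} {p r : V → ℕ}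
    (h : G.DRep M p r) {u v : V} (huv : p u = r v) :
    leftOffset G p r u ≤ (G.nbhd v).ncard ↔ G.Adj u v := by
  constructor
  · intro hle
    by_contra hn
    have : (G.nbhd v).ncard + 1 ≤ leftOffset G p r u :=
      Finset.le_sup (f := fun v => (G.nbhd v).ncard + 1) (by simp [huv, hn])
    omega
  · intro hadj
    refine Finset.sup_le fun v' hv' => ?_
    simp only [Finset.mem_filter, Finset.mem_univ, true_and] at hv'
    obtain ⟨s, -, hsu, hsv⟩ := (h.adj u v).1 hadj
    -- `u` itself witnesses that the inclusion `N[v'] ⊆ N[v]` is strict.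
    have hsub : G.nbhd v' ⊆ G.nbhd v := h.nbhd_subset fun t ht htv =>
      subset_of_disjoint (h.p_lt u) huv.symm hv'.1 hsu hsv
        (fun hd => hv'.2 ((h.adj u v').2 hd)) ht htv
    refine Set.ncard_lt_ncard ⟨hsub, fun hs => hv'.2 ?_⟩ (Set.toFinite _)
    exact G.symm _ _ (hs (G.symm _ _ hadj))

lemma leftOffset_anti [Fintype V] {G : LoopGraph V} {p r : V → ℕ} {u v : V}
    (huv : p u = p v) (hs : G.nbhd v ⊆ G.nbhd u) :
    leftOffset G p r u ≤ leftOffset G p r v := by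
  refine Finset.sup_mono fun x => ?_
  simp only [Finset.mem_filter, Finset.mem_univ, true_and]
  exact fun hx => ⟨huv ▸ hx.1, fun hv => hx.2 (hs hv)⟩

/-- Containment of cyclic intervals expressed by saying that the smaller one does not meet the
complement of the larger one. -/
lemma not_meet_of_subset {M pu ru pv rv : ℕ} (hpu : pu < M) (hru : ru < M) (hpv : pv < M)
    (hrv : rv < M) (hu : pu ≠ ru) (hv : pv ≠ rv)
    (h : ∀ t < M, cmem pv rv t → cmem pu ru t) :
    ¬ Meet (ru < pu) (pv < rv) (ru < rv) (pv < pu) := by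
  have hmem : ∀ t, ¬ (t < M ∧ cmem pv rv t ∧ ¬ cmem pu ru t) :=
    fun t h' => h'.2.2 (h t h'.1 h'.2.1)
  unfold Meet
  rcases hu.lt_or_gt with hu | hu <;> rcases hv.lt_or_gt with hv | hv
  · have h1 := hmem (pv + 1)
    have h2 := hmem rv
    unfold cmem at h1 h2
    omega
  · have h1 := hmem 0
    unfold cmem at h1
    omega
  · have h1 := hmem (max pv ru + 1)
    unfold cmem at h1
    omega
  · have h1 := hmem (ru + 1)
    have h2 := hmem pu
    unfold cmem at h1 h2
    omega

lemma MaxRep.exists_fineRep [Finite V] {G : LoopGraph V} (hu : ∀ u, ¬ G.Universal u)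
    {M : ℕ} {p r : V → ℕ} (h : G.MaxRep M p r) :
    ∃ L R : V → ℕ ×ₗ ℕ, G.FineRep L R := by
  have := Fintype.ofFinite V
  let y := leftOffset G p r
  let x := fun v => (G.nbhd v).ncard
  have hLR : ∀ u v, (toLex (p u, y u) ≤ toLex (r v, x v)) ↔
      p u < r v ∨ (p u = r v ∧ G.Adj u v) := by
    intro u v
    rw [Prod.Lex.toLex_le_toLex]
    exact or_congr Iff.rfl (and_congr_right fun he => h.leftOffset_le_iff he)
  have hRL : ∀ u v, (toLex (r v, x v) < toLex (p u, y u)) ↔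
      ¬ (p u < r v ∨ (p u = r v ∧ G.Adj u v)) := by
    intro u v
    rw [← hLR, not_le]
  refine ⟨fun u => toLex (p u, y u), fun u => toLex (r u, x u),
    fineRep_of_imp hu (fun u v => ?_) (fun u v huv => ?_) (fun u v huv => ?_)⟩
  · have hm := exists_cmem_iff_meet (h.p_lt u) (h.r_lt u) (h.p_lt v) (h.r_lt v) (h.ne u) (h.ne v)
    rw [← h.adj] at hm
    have hs : G.Adj v u ↔ G.Adj u v := ⟨G.symm _ _, G.symm _ _⟩
    have := h.ne u
    have := h.ne v
    simp only [hLR, hs]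
    by_cases ha : G.Adj u v
    · simp only [ha, true_iff, and_true] at hm ⊢
      unfold Meet at *
      omega
    · simp only [ha, false_iff, and_false, or_false] at hm ⊢
      unfold Meet at *
      omega
  · have hD : ∀ t < M, cmem (p v) (r v) t → cmem (p u) (r u) t := fun t ht => h.subset huv ht
    have hm := not_meet_of_subset (h.p_lt u) (h.r_lt u) (h.p_lt v) (h.r_lt v) (h.ne u) (h.ne v) hD
    have hx : x v ≤ x u := Set.ncard_le_ncard huv (Set.toFinite _)
    have hy : p u = p v → y u ≤ y v := fun he => leftOffset_anti he huv
    have := h.ne u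
    have := h.ne v
    simp only [hLR, hRL, Prod.Lex.toLex_lt_toLex]
    unfold Meet at *
    omega
  · have hc : ∀ t < M, cmem (p u) (r u) t ∨ cmem (p v) (r v) t := fun t ht => h.cover huv ht
    have ha := huv.1.1
    have ha' := G.symm _ _ ha
    have hM := h.p_lt u
    have h0 := hc 0 (by omega)
    have h1 := hc _ (h.p_lt u)
    have h2 := hc _ (h.p_lt v)
    have := h.ne u
    have := h.ne v
    have := h.r_lt u
    have := h.r_lt v
    have h3 := hc (r u + 1)
    have h4 := hc (r v + 1)
    simp only [hRL, ha, ha', G.refl, and_true]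
    unfold Meet cmem at *
    omega

/-! ### Circular pairs and circular completions -/

open Classical in
/-- A partner is chosen for each vertex `f u`, in the image of `f` whenever possible. -/
lemma exists_partner {H : LoopGraph W} (f : V → W) (hH : H.CircularlyPaired) :
    ∃ b : V → W, ∀ u, H.CircularPair (f u) (b u) ∧
      (b u ∉ Set.range f → ∀ v, ¬ H.CircularPair (f u) (f v)) := by
  have : ∀ u, ∃ w, H.CircularPair (f u) w ∧
      (w ∉ Set.range f → ∀ v, ¬ H.CircularPair (f u) (f v)) := by
    intro u
    by_cases h : ∃ v, H.CircularPair (f u) (f v)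
    · obtain ⟨v, hv⟩ := h
      exact ⟨f v, hv, fun hn => absurd ⟨v, rfl⟩ hn⟩
    · obtain ⟨w, hw⟩ := hH (f u)
      exact ⟨w, hw, fun _ v hv => h ⟨v, hv⟩⟩
  exact ⟨fun u => (this u).choose, fun u => (this u).choose_spec⟩

lemma SpanningPair.symm {H : LoopGraph W} {a b : W} (h : H.SpanningPair a b) :
    H.SpanningPair b a := ⟨h.2, h.1⟩

lemma CircularPair.symm {H : LoopGraph W} {a b : W} (h : H.CircularPair a b) :
    H.CircularPair b a := ⟨h.1.symm, fun h' => h.2 (H.symm _ _ h')⟩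

lemma CircularPair.not_adj_iff {H : LoopGraph W} {a b c : W} (h : H.CircularPair a b) :
    ¬ H.Adj b c ↔ H.nbhd c ⊆ H.nbhd a :=
  ⟨h.1.1 c, fun hs hbc => h.2 (hs (H.symm _ _ hbc))⟩

lemma CircularPair.spanningPair_iff {H : LoopGraph W} {a c c' : W}
    (h' : H.CircularPair c c') : H.SpanningPair a c ↔ H.nbhd c' ⊆ H.nbhd a := by
  constructor
  · exact fun hs => hs.1 c' h'.2
  · refine fun hs => ⟨fun x hx => (h'.1.2 x hx).trans hs, fun y hy => ?_⟩
    exact h'.1.1 y fun hn => hy (hs hn)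

/-- The subgraph of `H` induced on `S`, as a graph on the subtype. -/
def restrict (H : LoopGraph W) (S : Set W) : LoopGraph S where
  Adj a b := H.Adj a b
  symm _ _ h := H.symm _ _ h
  refl a := H.refl a

section Restrict

variable {H : LoopGraph W} {S : Set W}

lemma nbhd_subset_restrict {a b : S} (h : H.nbhd a ⊆ H.nbhd b) :
    (H.restrict S).nbhd a ⊆ (H.restrict S).nbhd b := fun _ hx => h hx

lemma SpanningPair.restrict {a b : S} (h : H.SpanningPair a b) :
    (H.restrict S).SpanningPair a b :=
  ⟨fun x hx => nbhd_subset_restrict (h.1 x hx), fun y hy => nbhd_subset_restrict (h.2 y hy)⟩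

/-- The partner `b'` of `b` detects the inclusion `N[a] ⊆ N[b]`: it holds iff `a` and `b'` are
nonadjacent. -/
lemma restrict_nbhd_subset_iff (hS : ∀ a ∈ S, ∃ b ∈ S, H.CircularPair a b) (a b : S) :
    (H.restrict S).nbhd a ⊆ (H.restrict S).nbhd b ↔ H.nbhd a ⊆ H.nbhd b := by
  refine ⟨fun h => ?_, nbhd_subset_restrict⟩
  obtain ⟨b', hb', hp⟩ := hS b b.2
  rw [← hp.not_adj_iff]
  intro hn
  exact hp.2 (h (show (⟨b', hb'⟩ : S) ∈ _ from H.symm _ _ hn))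

lemma restrict_spanningPair_iff (hS : ∀ a ∈ S, ∃ b ∈ S, H.CircularPair a b) (a b : S) :
    (H.restrict S).SpanningPair a b ↔ H.SpanningPair a b := by
  refine ⟨fun h => ⟨?_, ?_⟩, SpanningPair.restrict⟩
  · obtain ⟨b', hb', hp⟩ := hS b b.2
    have := h.1 ⟨b', hb'⟩ hp.2
    rw [restrict_nbhd_subset_iff hS] at this
    exact fun x hx => (hp.1.2 x hx).trans this
  · obtain ⟨a', ha', hp⟩ := hS a a.2
    have := h.2 ⟨a', ha'⟩ hp.2
    rw [restrict_nbhd_subset_iff hS] at this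
    exact fun x hx => (hp.1.2 x hx).trans this

end Restrict

/-- By minimality, a circular completion consists of the vertices `f u` and one partner for each of
them, as these induce a circularly-paired graph with the same edge types. -/
lemma IsCircularCompletion.exists_eq {G : LoopGraph V} {H : LoopGraph W} {f : V → W}
    (h : G.IsCircularCompletion H f) {b : V → W} (hb : ∀ u, H.CircularPair (f u) (b u)) (w : W) :
    (∃ u, f u = w) ∨ ∃ u, b u = w := by
  obtain ⟨hfin, hemb, htype, -, hmin⟩ := h
  let S : Set W := Set.range f ∪ Set.range b
  have hS : ∀ a ∈ S, ∃ c ∈ S, H.CircularPair a c := by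
    rintro _ (⟨u, rfl⟩ | ⟨u, rfl⟩)
    · exact ⟨b u, Or.inr ⟨u, rfl⟩, hb u⟩
    · exact ⟨f u, Or.inl ⟨u, rfl⟩, (hb u).symm⟩
  have hcard := hmin S (H.restrict S) (fun u => ⟨f u, Or.inl ⟨u, rfl⟩⟩) inferInstance
    ⟨fun u v huv => hemb.1 (congrArg Subtype.val huv), fun u v => hemb.2 u v⟩
    (fun u v huv => by
      have := htype u v huv
      unfold InclusionEdge OneOverlapEdge TwoOverlapEdge Overlaps at *
      simp only [restrict_nbhd_subset_iff hS, restrict_spanningPair_iff hS]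
      exact this)
    (fun a => by
      obtain ⟨c, hc, hp⟩ := hS a a.2
      exact ⟨⟨c, hc⟩, hp.1.restrict, hp.2⟩)
  have hSu : S = Set.univ := by
    apply Set.eq_univ_of_univ_subset
    refine (Set.eq_of_subset_of_ncard_le (Set.subset_univ S) ?_).ge
    rwa [Set.ncard_univ]
  have : w ∈ S := hSu ▸ Set.mem_univ w
  exact this

/-- An inclusion edge of `G` stays one in `H`, and the direction of the inclusion is kept because `G`
has no true twins. -/
lemma SameEdgeTypes.nbhd_subset_iff {G : LoopGraph V} {H : LoopGraph W} {f : V → W}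
    (ht : ∀ a b, ¬ G.TrueTwins a b) (hf : ∀ u v, (G.Adj u v ↔ H.Adj (f u) (f v)))
    (h : G.SameEdgeTypes H f) (u v : V) :
    H.nbhd (f v) ⊆ H.nbhd (f u) ↔ G.nbhd v ⊆ G.nbhd u := by
  have hdown : ∀ a b, H.nbhd (f a) ⊆ H.nbhd (f b) → G.nbhd a ⊆ G.nbhd b :=
    fun a b hs x hx => (hf b x).2 (hs ((hf a x).1 hx))
  refine ⟨hdown v u, fun hs => ?_⟩
  have hadj : G.Adj u v := hs (G.refl v)
  rcases ((h u v hadj).1.1 ⟨hadj, Or.inr hs⟩).2 with h1 | h1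
  · have : u = v := by_contra fun hne => ht u v ⟨hne, (hdown u v h1).antisymm hs⟩
    rw [this]
  · exact h1

lemma not_spanningPair_of_subset {H : LoopGraph W} {a b c : W} (hc : H.CircularPair b c)
    (hab : H.nbhd a ⊆ H.nbhd b) : ¬ H.SpanningPair a b := by
  rw [hc.spanningPair_iff]
  exact fun h => hc.2 (hab (h (H.refl c)))

/-- An adjacent spanning pair of `H` is a 2-overlap edge, since an inclusion `N[a] ⊆ N[b]` would put the
partner of `b` into `N[b]`. -/
lemma SameEdgeTypes.twoOverlapEdge_iff {G : LoopGraph V} {H : LoopGraph W} {f : V → W}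
    (hf : ∀ u v, (G.Adj u v ↔ H.Adj (f u) (f v))) (hH : H.CircularlyPaired)
    (h : G.SameEdgeTypes H f) {u v : V} (huv : ¬ H.CircularPair (f u) (f v)) :
    H.SpanningPair (f u) (f v) ↔ G.TwoOverlapEdge u v := by
  constructor
  · intro hs
    have hadj : G.Adj u v := by
      rw [hf]
      exact by_contra fun hn => huv ⟨hs, hn⟩
    refine (h u v hadj).2.2.2 ⟨⟨(hf u v).1 hadj, fun hs' => ?_, fun hs' => ?_⟩, hs⟩
    · obtain ⟨c, hc⟩ := hH (f v)
      exact not_spanningPair_of_subset hc hs' hs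
    · obtain ⟨c, hc⟩ := hH (f u)
      exact not_spanningPair_of_subset hc hs' hs.symm
  · intro h2
    exact ((h u v h2.1.1).2.2.1 h2).2

lemma IsCircularArc.of_inducedEmb {G : LoopGraph V} {H : LoopGraph W} {f : V → W}
    (hf : G.InducedEmb H f) (h : H.IsCircularArc) : G.IsCircularArc := by
  obtain ⟨l, r, hl, hr, hinj, hadj⟩ := h
  refine ⟨l ∘ f, r ∘ f, fun _ => hl _, fun _ => hr _, ?_, fun u v => ?_⟩
  · have : Sum.elim (l ∘ f) (r ∘ f) = Sum.elim l r ∘ Sum.map f f := by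
      rw [Sum.elim_comp_map]
    rw [this]
    exact hinj.comp (hf.1.sumMap hf.1)
  · rw [hf.2, hadj]
    rfl

end LoopGraph

/-! ### Completing a representation -/

/-- A circular completion `G'` of `G` is a circular-arc graph iff `G`
is a circular-arc graph. -/
theorem circularCompletion_circularArc_iff
    {V W : Type} [Fintype V] (G : LoopGraph V)
    (hu : ∀ u, ¬ G.Universal u) (ht : ∀ a b, ¬ G.TrueTwins a b)
    (H : LoopGraph W) (f : V → W) (hcomp : G.IsCircularCompletion H f) :
    H.IsCircularArc ↔ G.IsCircularArc := by
  refine ⟨LoopGraph.IsCircularArc.of_inducedEmb hcomp.2.1, fun hG => ?_⟩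
  obtain ⟨M, p₀, r₀, h₀⟩ := hG.exists_dRep
  obtain ⟨p, r, hmax⟩ := h₀.exists_maxRep hu
  obtain ⟨L, R, hfine⟩ := hmax.exists_fineRep hu
  obtain ⟨b, hb⟩ := LoopGraph.exists_partner f hcomp.2.2.2.1
  have hcover := hcomp.exists_eq fun u => (hb u).1
  obtain ⟨hfin, ⟨hinj, hf⟩, htype, hpaired, -⟩ := hcomp
  -- `(u, true)` encodes the vertex `f u`, and `(u, false)` the partner `b u` if it is not in the image.
  have hcode : ∀ w, ∃ c : V × Bool, (c.2 = true → f c.1 = w) ∧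
      (c.2 = false → b c.1 = w ∧ b c.1 ∉ Set.range f) := by
    intro w
    by_cases hw : w ∈ Set.range f
    · obtain ⟨u, rfl⟩ := hw
      exact ⟨(u, true), by simp⟩
    · rcases hcover w with h | ⟨u, rfl⟩
      · exact absurd h hw
      · exact ⟨(u, false), by simpa using hw⟩
  choose c hc1 hc2 using hcode
  -- The vertex `f u` gets the arc `[L u, R u]`, the vertex `b u` its complement.  The second coordinate
  -- makes the complement start just after `R u` and end just before `L u`, while a left end `L u`
  -- still precedes a right end `R v` of the same value.
  let l : V × Bool → (ℕ ×ₗ ℕ) ×ₗ ℕ := fun x =>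
    if x.2 then toLex (L x.1, 1) else toLex (R x.1, 3)
  let r' : V × Bool → (ℕ ×ₗ ℕ) ×ₗ ℕ := fun x =>
    if x.2 then toLex (R x.1, 2) else toLex (L x.1, 0)
  have e11 : ∀ u v, l (u, true) ≤ r' (v, true) ↔ L u ≤ R v := by
    intro u v
    rw [le_iff_lt_or_eq (a := L u)]
    simp [l, r', Prod.Lex.toLex_le_toLex]
  have e10 : ∀ u v, l (u, true) ≤ r' (v, false) ↔ L u < L v := by
    intro u v
    simp [l, r', Prod.Lex.toLex_le_toLex]
  have e01 : ∀ u v, l (u, false) ≤ r' (v, true) ↔ R u < R v := by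
    intro u v
    simp [l, r', Prod.Lex.toLex_le_toLex]
  have e00 : ∀ u v, l (u, false) ≤ r' (v, false) ↔ R u < L v := by
    intro u v
    simp [l, r', Prod.Lex.toLex_le_toLex]
  have hmixed : ∀ u v, H.Adj (b u) (f v) ↔
      Meet (R u < L u) (L v ≤ R v) (R u < R v) (L v < L u) := by
    intro u v
    rw [← not_iff_not, (hb u).1.not_adj_iff, htype.nbhd_subset_iff ht hf, hfine.compl_left]
  refine H.isCircularArc_of_meet (fun w => l (c w)) (fun w => r' (c w)) fun w w' => ?_
  have hw1 := hc1 w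
  have hw2 := hc2 w
  have hw1' := hc1 w'
  have hw2' := hc2 w'
  generalize c w = x at *
  generalize c w' = x' at *
  rcases x with ⟨u, _ | _⟩ <;> rcases x' with ⟨v, _ | _⟩ <;>
    simp only [e00, e01, e10, e11]
  · obtain ⟨rfl, hbu⟩ := hw2 rfl
    obtain ⟨rfl, hbv⟩ := hw2' rfl
    rw [← not_iff_not, hfine.compl_compl,
      ← htype.twoOverlapEdge_iff hf hpaired ((hb u).2 hbu v),
      (hb u).1.not_adj_iff, (hb v).1.spanningPair_iff]
  · obtain ⟨rfl, hbu⟩ := hw2 rfl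
    obtain rfl := hw1' rfl
    exact hmixed u v
  · obtain rfl := hw1 rfl
    obtain ⟨rfl, hbv⟩ := hw2' rfl
    rw [show H.Adj (f u) (b v) ↔ H.Adj (b v) (f u) from ⟨H.symm _ _, H.symm _ _⟩, hmixed]
    unfold Meet
    tauto
  · obtain rfl := hw1 rfl
    obtain rfl := hw1' rfl
    rw [← hf, hfine.adj]
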